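/- For the linear Fokker–Planck operator L f = Δ_v f + (1/4)(2d − |v|²) f on L²_v(ℝ^d), there exists a constant λ > 0 such that −⟨L f, f⟩ ≥ λ |{I − P} f|²_μ + |b^f|² for all suitable f, where b^f = ⟨v√M, f⟩. -/

import Mathlib

open MeasureTheory Real RealInnerProductSpace

noncomputable section

/-- `Ed d` is Euclidean space `ℝ^d`. -/
abbrev Ed (d : ℕ) := EuclideanSpace ℝ (Fin d)

/-- The global Maxwellian `M(v) = (2π)^{-d/2} exp(-|v|²/2)`. -/
def maxw (d : ℕ) (v : Ed d) : ℝ := (2 * π) ^ (-(d : ℝ) / 2) * Real.exp (-‖v‖ ^ 2 / 2)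

/-- `√M`. -/
def sqrtM (d : ℕ) (v : Ed d) : ℝ := Real.sqrt (maxw d v)

/-- macroscopic density `a(x) = ∫ √M f dv`. -/
def macroA (d : ℕ) (f : Ed d → Ed d → ℝ) (x : Ed d) : ℝ := ∫ v : Ed d, sqrtM d v * f x v

/-- macroscopic momentum `b(x) = ∫ v √M f dv`. -/
def macroB (d : ℕ) (f : Ed d → Ed d → ℝ) (x : Ed d) : Ed d :=
  ∫ v : Ed d, (sqrtM d v * f x v) • v

/-- local averaged velocity `u_F = b/(1+a)`. -/
def uF (d : ℕ) (f : Ed d → Ed d → ℝ) (x : Ed d) : Ed d :=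
  (1 + macroA d f x)⁻¹ • macroB d f x

/-- the projection `P f = (a + b·v)√M`. -/
def projP (d : ℕ) (f : Ed d → Ed d → ℝ) (x v : Ed d) : ℝ :=
  (macroA d f x + ⟪macroB d f x, v⟫) * sqrtM d v

/-- the microscopic part `{I - P} f`. -/
def IminusP (d : ℕ) (f : Ed d → Ed d → ℝ) : Ed d → Ed d → ℝ :=
  fun x v => f x v - projP d f x v

/-- Laplacian in the velocity variable. -/
def lapv (d : ℕ) (g : Ed d → ℝ) (v : Ed d) : ℝ :=
  ∑ i : Fin d,
    fderiv ℝ (fun w => fderiv ℝ g w (EuclideanSpace.single i 1)) v (EuclideanSpace.single i 1)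

/-- the linear Fokker–Planck operator `L g = Δ_v g + (1/4)(2d - |v|²) g`. -/
def fpL (d : ℕ) (g : Ed d → ℝ) (v : Ed d) : ℝ :=
  lapv d g v + (1 / 4) * (2 * (d : ℝ) - ‖v‖ ^ 2) * g v

/-- the nonlinear term `Γ = u·((1/2) v f + v √M)` evaluated pointwise. -/
def gammaTerm (d : ℕ) (u : Ed d) (fv : ℝ) (v : Ed d) : ℝ :=
  ⟪u, ((1 / 2) * fv) • v + sqrtM d v • v⟫

/-- `f` solves at time `t` the equation linearized along `fb`:
`∂_t f + v·∇_x f + u_{F̄}·∇_v f = L f + Γ(f̄,f)`. -/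
def SolvesLin (d : ℕ) (fb f : ℝ → Ed d → Ed d → ℝ) (t : ℝ) : Prop :=
  ∀ x v : Ed d,
    deriv (fun τ => f τ x v) t
      + fderiv ℝ (fun y => f t y v) x v
      + fderiv ℝ (fun w => f t x w) v (uF d (fb t) x)
    = fpL d (fun w => f t x w) v + gammaTerm d (uF d (fb t) x) (f t x v) v

/-- `f` solves the perturbed Vlasov–Fokker–Planck equation at time `t`. -/
def SolvesVFP (d : ℕ) (f : ℝ → Ed d → Ed d → ℝ) (t : ℝ) : Prop :=
  SolvesLin d f f t

/-- regularity part of being a classical solution on `[0,T]`. -/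
def ClassicalReg (d : ℕ) (f : ℝ → Ed d → Ed d → ℝ) (T : ℝ) : Prop :=
  ContinuousOn (fun p : ℝ × Ed d × Ed d => f p.1 p.2.1 p.2.2) {p | p.1 ∈ Set.Icc 0 T} ∧
  (∀ t ∈ Set.Icc (0 : ℝ) T, ContDiff ℝ 2 (fun p : Ed d × Ed d => f t p.1 p.2)) ∧
  (∀ x v : Ed d, ∀ t ∈ Set.Ioo (0 : ℝ) T, DifferentiableAt ℝ (fun τ => f τ x v) t)

/-- classical solution of the nonlinear equation on `[0,T]`. -/
def IsClassicalSolutionOn (d : ℕ) (f : ℝ → Ed d → Ed d → ℝ) (T : ℝ) : Prop :=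
  ClassicalReg d f T ∧ ∀ t ∈ Set.Ioo (0 : ℝ) T, SolvesVFP d f t

/-- regularity part of being a global classical solution. -/
def GlobalClassicalReg (d : ℕ) (f : ℝ → Ed d → Ed d → ℝ) : Prop :=
  ContinuousOn (fun p : ℝ × Ed d × Ed d => f p.1 p.2.1 p.2.2) {p | 0 ≤ p.1} ∧
  (∀ t : ℝ, 0 ≤ t → ContDiff ℝ 2 (fun p : Ed d × Ed d => f t p.1 p.2)) ∧
  (∀ x v : Ed d, ∀ t : ℝ, 0 < t → DifferentiableAt ℝ (fun τ => f τ x v) t)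

/-- global-in-time classical solution of the nonlinear equation. -/
def IsGlobalClassicalSolution (d : ℕ) (f : ℝ → Ed d → Ed d → ℝ) : Prop :=
  GlobalClassicalReg d f ∧ ∀ t : ℝ, 0 < t → SolvesVFP d f t

/-- squared Sobolev norm `‖g‖²_{H^s}` in the variables `(x,v)`. -/
def hsNormSq (d s : ℕ) (g : Ed d → Ed d → ℝ) : ℝ :=
  ∑ k ∈ Finset.range (s + 1),
    ∫ z : Ed d × Ed d, ‖iteratedFDeriv ℝ k (fun p : Ed d × Ed d => g p.1 p.2) z‖ ^ 2

/-- squared `L²_x` norm of the `k`-th spatial derivative of `g`. -/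
def xDerivL2Sq {X : Type*} [NormedAddCommGroup X] [NormedSpace ℝ X] (d : ℕ) (k : ℕ)
    (g : Ed d → X) : ℝ := ∫ x : Ed d, ‖iteratedFDeriv ℝ k g x‖ ^ 2

/-- `‖∇_x(a,b)‖²_{H^{s-1}}`. -/
def gradABNormSq (d s : ℕ) (g : Ed d → Ed d → ℝ) : ℝ :=
  ∑ k ∈ Finset.Icc 1 s, (xDerivL2Sq d k (macroA d g) + xDerivL2Sq d k (macroB d g))

/-- the mixed derivative `∇_x^k ∇_v^l g`. -/
def mixedDeriv (d k l : ℕ) (g : Ed d → Ed d → ℝ) (x v : Ed d) :=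
  iteratedFDeriv ℝ k (fun y => iteratedFDeriv ℝ l (fun w => g y w) v) x

/-- squared `L²_{x,v}` norm of `∇_x^k ∇_v^l g`. -/
def mixedL2Sq (d k l : ℕ) (g : Ed d → Ed d → ℝ) : ℝ :=
  ∫ x : Ed d, ∫ v : Ed d, ‖mixedDeriv d k l g x v‖ ^ 2

/-- squared weighted norm `‖∇_x^k ∇_v^l g‖²_μ`. -/
def mixedMuNormSq (d k l : ℕ) (g : Ed d → Ed d → ℝ) : ℝ :=
  ∫ x : Ed d, ∫ v : Ed d,
    (‖fderiv ℝ (fun w => mixedDeriv d k l g x w) v‖ ^ 2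
      + (1 + ‖v‖ ^ 2) * ‖mixedDeriv d k l g x v‖ ^ 2)

/-- `‖g‖²_{L²_v(H^s_x)}`. -/
def l2vHsSq (d s : ℕ) (g : Ed d → Ed d → ℝ) : ℝ :=
  ∑ k ∈ Finset.range (s + 1), mixedL2Sq d k 0 g

/-- `‖g‖²_{L²_v(L¹_x)}`. -/
def l2vL1Sq (d : ℕ) (g : Ed d → Ed d → ℝ) : ℝ :=
  ∫ v : Ed d, (∫ x : Ed d, |g x v|) ^ 2

/-- plain squared `L²_{x,v}` norm. -/
def l2Sq (d : ℕ) (g : Ed d → Ed d → ℝ) : ℝ :=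
  ∫ x : Ed d, ∫ v : Ed d, (g x v) ^ 2

/-- the moment functional `A_{ij}(g)(x) = ⟨(v_i v_j - 1)√M, g(x,·)⟩`. -/
def Aij (d : ℕ) (i j : Fin d) (g : Ed d → Ed d → ℝ) (x : Ed d) : ℝ :=
  ∫ v : Ed d, (v i * v j - 1) * sqrtM d v * g x v

/-- squared weighted norm `|g|²_μ = ∫ (|∇_v g|² + (1+|v|²)|g|²) dv` in velocity only. -/
def muNormSqV (d : ℕ) (g : Ed d → ℝ) : ℝ :=
  ∫ v : Ed d, (‖fderiv ℝ g v‖ ^ 2 + (1 + ‖v‖ ^ 2) * (g v) ^ 2)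

/-- `a^f = ⟨√M, f⟩`. -/
def aFv (d : ℕ) (g : Ed d → ℝ) : ℝ := ∫ v : Ed d, sqrtM d v * g v

/-- `b^f = ⟨v√M, f⟩`. -/
def bFv (d : ℕ) (g : Ed d → ℝ) : Ed d := ∫ v : Ed d, (sqrtM d v * g v) • v

/-- `{I - P} g` for a function of the velocity only, `P g = (a^g + b^g·v)√M`. -/
def IminusPv (d : ℕ) (g : Ed d → ℝ) (v : Ed d) : ℝ :=
  g v - (aFv d g + ⟪bFv d g, v⟫) * sqrtM d v

/-!
Write `A g = ∇g + (g / 2) v`, so that `-⟨L g, g⟩ = ∫ ‖A g‖²` and `A (√M h) = √M ∇h`. With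
`f = √M h`, the theorem is then a statement about the Dirichlet form of the standard Gaussian `γ`:
subtracting `P f` from `f` replaces `∇h` by `∇h - ∫ ∇h dγ`, and `∫ ∇h dγ = b^f`, so splitting
`∫ ‖∇h‖² dγ` into variance and squared mean produces exactly `‖b^f‖²`.

The Gaussian Poincaré inequality bounds `∫ g²` by `∫ ‖A g‖²` for `g = {I - P} f`. It follows from
the invariance of `γ ⊗ γ` under the rotations `(x, y) ↦ (cos θ x + sin θ y, cos θ y - sin θ x)`, by
writing `h y - h x` as an integral of derivatives along a quarter turn. Expanding the square gives
`∫ ‖A g‖² = ∫ ‖∇g‖² - d/2 ∫ g² + 1/4 ∫ ‖v‖² g²`, so the remaining terms of the `μ`-norm are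
bounded as well.
-/

open ProbabilityTheory InnerProductSpace
open scoped ENNReal SchwartzMap LineDeriv Gradient Laplacian

section GaussianPoincare

theorem lintegral_sq_le_measure_univ_mul {α : Type*} [MeasurableSpace α] {μ : Measure α}
    {f : α → ℝ≥0∞} (hf : AEMeasurable f μ) :
    (∫⁻ a, f a ∂μ) ^ 2 ≤ μ Set.univ * ∫⁻ a, f a ^ 2 ∂μ := by
  have holder := ENNReal.lintegral_mul_le_Lp_mul_Lq μ .two_two hf (aemeasurable_const (b := 1))
  simp only [Pi.mul_apply, mul_one, ENNReal.rpow_two, one_pow, lintegral_const, one_mul] at holder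
  calc (∫⁻ a, f a ∂μ) ^ 2
      ≤ ((∫⁻ a, f a ^ 2 ∂μ) ^ (1 / 2 : ℝ) * μ Set.univ ^ (1 / 2 : ℝ)) ^ 2 := by gcongr
    _ = μ Set.univ * ∫⁻ a, f a ^ 2 ∂μ := by
      simp [mul_pow, ← ENNReal.rpow_mul_natCast, mul_comm]

variable {E F : Type*} [NormedAddCommGroup E] [NormedSpace ℝ E]
  [NormedAddCommGroup F] [NormedSpace ℝ F] {h : E → F}

theorem continuous_rotation_apply {X : Type*} [TopologicalSpace X] {θ : X → ℝ} {z : X → E × E}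
    (hθ : Continuous θ) (hz : Continuous z) :
    Continuous fun x => ContinuousLinearMap.rotation (θ x) (z x) := by
  simp only [ContinuousLinearMap.rotation_apply]
  fun_prop

theorem hasDerivAt_fst_rotation (z : E × E) (θ : ℝ) :
    HasDerivAt (fun θ : ℝ => (ContinuousLinearMap.rotation θ z).1)
      (ContinuousLinearMap.rotation θ z).2 θ := by
  simp only [ContinuousLinearMap.rotation_apply]
  exact ((hasDerivAt_cos θ).smul_const z.1).add ((hasDerivAt_sin θ).smul_const z.2)

theorem continuous_fderiv_fst_apply_snd (hh : ContDiff ℝ 1 h) :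
    Continuous fun z : E × E => fderiv ℝ h z.1 z.2 :=
  ((hh.continuous_fderiv one_ne_zero).comp continuous_fst).clm_apply continuous_snd

theorem integral_fderiv_rotation [CompleteSpace F] (hh : ContDiff ℝ 1 h) (z : E × E) :
    ∫ θ in (0 : ℝ)..(π / 2), fderiv ℝ h (ContinuousLinearMap.rotation θ z).1
      (ContinuousLinearMap.rotation θ z).2 = h z.2 - h z.1 := by
  have hrot : Continuous fun θ : ℝ => ContinuousLinearMap.rotation θ z :=
    continuous_rotation_apply continuous_id continuous_const
  have hderiv (θ : ℝ) : HasDerivAt (fun θ : ℝ => h (ContinuousLinearMap.rotation θ z).1)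
      (fderiv ℝ h (ContinuousLinearMap.rotation θ z).1 (ContinuousLinearMap.rotation θ z).2) θ :=
    (hh.differentiable one_ne_zero _).hasFDerivAt.comp_hasDerivAt θ (hasDerivAt_fst_rotation z θ)
  rw [intervalIntegral.integral_eq_sub_of_hasDerivAt (fun θ _ => hderiv θ)
    (((continuous_fderiv_fst_apply_snd hh).comp hrot).intervalIntegrable _ _)]
  simp [ContinuousLinearMap.rotation_apply]

theorem enorm_sub_sq_le_lintegral_rotation [CompleteSpace F] (hh : ContDiff ℝ 1 h) (z : E × E) :
    ‖h z.1 - h z.2‖ₑ ^ 2 ≤ ENNReal.ofReal (π / 2) * ∫⁻ θ in Set.Ioc 0 (π / 2),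
      ‖fderiv ℝ h (ContinuousLinearMap.rotation θ z).1
        (ContinuousLinearMap.rotation θ z).2‖ₑ ^ 2 := by
  have hrot : Continuous fun θ : ℝ => ContinuousLinearMap.rotation θ z :=
    continuous_rotation_apply continuous_id continuous_const
  have hcont := (continuous_fderiv_fst_apply_snd hh).comp hrot
  calc ‖h z.1 - h z.2‖ₑ ^ 2
      = ‖∫ θ in Set.Ioc 0 (π / 2), fderiv ℝ h (ContinuousLinearMap.rotation θ z).1
          (ContinuousLinearMap.rotation θ z).2‖ₑ ^ 2 := by
        rw [← intervalIntegral.integral_of_le (by positivity), integral_fderiv_rotation hh,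
          ← enorm_neg, neg_sub]
    _ ≤ (∫⁻ θ in Set.Ioc 0 (π / 2), ‖fderiv ℝ h (ContinuousLinearMap.rotation θ z).1
          (ContinuousLinearMap.rotation θ z).2‖ₑ) ^ 2 := by
        gcongr
        exact enorm_integral_le_lintegral_enorm _
    _ ≤ _ := by
        simpa using lintegral_sq_le_measure_univ_mul (μ := volume.restrict (Set.Ioc 0 (π / 2)))
          hcont.enorm.measurable.aemeasurable

variable [CompleteSpace E] [SecondCountableTopology E] [MeasurableSpace E] [BorelSpace E]
  [CompleteSpace F]

theorem lintegral_enorm_sub_sq_le {μ : Measure E} [IsGaussian μ] (hμ : μ[id] = 0)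
    (hh : ContDiff ℝ 1 h) :
    ∫⁻ z, ‖h z.1 - h z.2‖ₑ ^ 2 ∂μ.prod μ
      ≤ ENNReal.ofReal (π / 2) ^ 2 * ∫⁻ z, ‖fderiv ℝ h z.1 z.2‖ₑ ^ 2 ∂μ.prod μ := by
  set G : E × E → ℝ≥0∞ := fun z => ‖fderiv ℝ h z.1 z.2‖ₑ ^ 2
  have hG : Measurable G := (continuous_fderiv_fst_apply_snd hh).enorm.measurable.pow_const 2
  have hrot : Continuous fun p : (E × E) × ℝ => ContinuousLinearMap.rotation p.2 p.1 :=
    continuous_rotation_apply continuous_snd continuous_fst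
  calc ∫⁻ z, ‖h z.1 - h z.2‖ₑ ^ 2 ∂μ.prod μ
      ≤ ∫⁻ z, ENNReal.ofReal (π / 2) * (∫⁻ θ in Set.Ioc 0 (π / 2),
          G (ContinuousLinearMap.rotation θ z)) ∂μ.prod μ :=
        lintegral_mono fun z => enorm_sub_sq_le_lintegral_rotation hh z
    _ = ENNReal.ofReal (π / 2) * ∫⁻ θ in Set.Ioc 0 (π / 2),
          ∫⁻ z, G (ContinuousLinearMap.rotation θ z) ∂μ.prod μ := by
        rw [lintegral_const_mul' _ _ ENNReal.ofReal_ne_top, lintegral_lintegral_swap]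
        exact (hG.comp hrot.measurable).aemeasurable
    _ = ENNReal.ofReal (π / 2) * ∫⁻ _ in Set.Ioc 0 (π / 2), ∫⁻ z, G z ∂μ.prod μ := by
        congr! 3 with θ
        conv_rhs => rw [← IsGaussian.map_rotation_eq_self hμ θ]
        rw [lintegral_map hG (by fun_prop)]
    _ = ENNReal.ofReal (π / 2) ^ 2 * ∫⁻ z, G z ∂μ.prod μ := by
        rw [setLIntegral_const, Real.volume_Ioc, sub_zero]
        ring

theorem integral_sub_sq_prod_self {α : Type*} [MeasurableSpace α] {μ : Measure α}
    [IsProbabilityMeasure μ] {f : α → ℝ} (hf : MemLp f 2 μ) :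
    ∫ z, (f z.1 - f z.2) ^ 2 ∂μ.prod μ = 2 * Var[f; μ] := by
  have hmean : ∫ z, (f z.1 + (-f) z.2) ∂μ.prod μ = 0 := by
    have hint := hf.integrable one_le_two
    rw [integral_add (hint.comp_fst μ) (hint.neg.comp_snd μ),
      integral_fun_fst f, integral_fun_snd (-f)]
    simp [integral_neg]
  have hvar := variance_add_prod hf hf.neg
  rw [variance_of_integral_eq_zero _ hmean, variance_neg] at hvar
  · simpa [← sub_eq_add_neg, two_mul] using hvar
  · exact (hf.1.comp_fst.add hf.neg.1.comp_snd).aemeasurable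

end GaussianPoincare

section StandardGaussian

variable {E : Type*} [NormedAddCommGroup E] [InnerProductSpace ℝ E] [FiniteDimensional ℝ E]
  [MeasurableSpace E] [BorelSpace E]

theorem lintegral_enorm_dual_sq_stdGaussian (L : StrongDual ℝ E) :
    ∫⁻ y, ‖L y‖ₑ ^ 2 ∂stdGaussian E = ‖L‖ₑ ^ 2 := by
  have hL : MemLp L 2 (stdGaussian E) := IsGaussian.memLp_dual _ L 2 (by simp)
  calc ∫⁻ y, ‖L y‖ₑ ^ 2 ∂stdGaussian E
      = evariance L (stdGaussian E) := by
        simp [evariance, integral_strongDual_stdGaussian]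
    _ = ENNReal.ofReal Var[L; stdGaussian E] := hL.ofReal_variance_eq.symm
    _ = ‖L‖ₑ ^ 2 := by
        rw [variance_dual_stdGaussian, ENNReal.ofReal_pow (norm_nonneg _), ofReal_norm]

theorem variance_stdGaussian_le {h : E → ℝ} (hh : ContDiff ℝ 1 h)
    (hmem : MemLp h 2 (stdGaussian E)) (hfd : MemLp (fderiv ℝ h) 2 (stdGaussian E)) :
    Var[h; stdGaussian E] ≤ π ^ 2 / 8 * ∫ x, ‖fderiv ℝ h x‖ ^ 2 ∂stdGaussian E := by
  set γ := stdGaussian E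
  have hint : Integrable (fun z : E × E => (h z.1 - h z.2) ^ 2) (γ.prod γ) :=
    ((hmem.comp_fst γ).sub (hmem.comp_snd γ)).integrable_sq
  have hfd_sq : Integrable (fun x => ‖fderiv ℝ h x‖ ^ 2) γ := hfd.norm.integrable_sq
  suffices hdouble : 2 * Var[h; γ] ≤ (π / 2) ^ 2 * ∫ x, ‖fderiv ℝ h x‖ ^ 2 ∂γ by linarith
  rw [← integral_sub_sq_prod_self hmem, ← ENNReal.ofReal_le_ofReal_iff (by positivity)]
  calc ENNReal.ofReal (∫ z, (h z.1 - h z.2) ^ 2 ∂γ.prod γ)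
      = ∫⁻ z, ‖h z.1 - h z.2‖ₑ ^ 2 ∂γ.prod γ := by
        rw [ofReal_integral_eq_lintegral_ofReal hint (.of_forall fun z => sq_nonneg _)]
        simp [Real.enorm_eq_ofReal_abs, ← ENNReal.ofReal_pow]
    _ ≤ ENNReal.ofReal (π / 2) ^ 2 * ∫⁻ z, ‖fderiv ℝ h z.1 z.2‖ₑ ^ 2 ∂γ.prod γ :=
        lintegral_enorm_sub_sq_le integral_id_stdGaussian hh
    _ = ENNReal.ofReal (π / 2) ^ 2 * ∫⁻ x, ‖fderiv ℝ h x‖ₑ ^ 2 ∂γ := by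
        rw [lintegral_prod _
          ((continuous_fderiv_fst_apply_snd hh).enorm.measurable.pow_const 2).aemeasurable]
        simp_rw [γ, lintegral_enorm_dual_sq_stdGaussian]
    _ = ENNReal.ofReal ((π / 2) ^ 2 * ∫ x, ‖fderiv ℝ h x‖ ^ 2 ∂γ) := by
        rw [ENNReal.ofReal_mul (by positivity), ENNReal.ofReal_pow (by positivity),
          ofReal_integral_eq_lintegral_ofReal hfd_sq (.of_forall fun x => by positivity)]
        simp [ENNReal.ofReal_pow]

end StandardGaussian

section GaussianSchwartz

variable {V : Type*} [NormedAddCommGroup V] [InnerProductSpace ℝ V] {b : ℝ}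

theorem one_add_pow_mul_exp_neg_mul_sq_le (hb : 0 < b) (m : ℕ) {r : ℝ} (hr : 0 ≤ r) :
    (1 + r) ^ m * exp (-b * r ^ 2) ≤ exp (m ^ 2 / (4 * b)) := by
  have hpow : (1 + r) ^ m ≤ exp (m * r) := by
    rw [exp_nat_mul]
    gcongr
    linarith [add_one_le_exp r]
  have hsquare : m * r + -b * r ^ 2 = m ^ 2 / (4 * b) - b * (r - m / (2 * b)) ^ 2 := by
    field_simp
    ring
  calc (1 + r) ^ m * exp (-b * r ^ 2)
      ≤ exp (m * r) * exp (-b * r ^ 2) := by gcongr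
    _ = exp (m ^ 2 / (4 * b) - b * (r - m / (2 * b)) ^ 2) := by rw [← exp_add, hsquare]
    _ ≤ exp (m ^ 2 / (4 * b)) := by
      gcongr
      linarith [mul_nonneg hb.le (sq_nonneg (r - m / (2 * b)))]

theorem exists_norm_iteratedFDeriv_exp_le {f : V → ℝ} (hf : f.HasTemperateGrowth) (n : ℕ) :
    ∃ (C : ℝ) (l : ℕ), ∀ x, ‖iteratedFDeriv ℝ n (fun v => exp (f v)) x‖
      ≤ C * (1 + ‖x‖) ^ l * exp (f x) := by
  obtain ⟨l, C, hC, hbound⟩ := hf.norm_iteratedFDeriv_le_uniform n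
  refine ⟨n.factorial * (1 + C) ^ n, l * n, fun x => ?_⟩
  set D := (1 + C) * (1 + ‖x‖) ^ l
  have hD : 1 ≤ D := one_le_mul_of_one_le_of_one_le (by linarith) (one_le_pow₀ (by simp))
  have hcomp := norm_iteratedFDeriv_comp_le contDiff_exp hf.1 (mod_cast le_top) x
    (C := exp (f x)) (D := D)
    (fun i _ => by simp [norm_iteratedFDeriv_eq_norm_iteratedDeriv, iteratedDeriv_eq_iterate])
    (fun i hi hin => calc
      ‖iteratedFDeriv ℝ i f x‖ ≤ C * (1 + ‖x‖) ^ l := hbound i hin x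
      _ ≤ D := by unfold D; gcongr; linarith
      _ ≤ D ^ i := le_self_pow₀ hD (by lia))
  calc ‖iteratedFDeriv ℝ n (fun v => exp (f v)) x‖ ≤ n.factorial * exp (f x) * D ^ n := hcomp
    _ = n.factorial * (1 + C) ^ n * (1 + ‖x‖) ^ (l * n) * exp (f x) := by
      simp only [D, mul_pow, ← pow_mul]
      ring

theorem exists_norm_pow_mul_iteratedFDeriv_gaussian_le (hb : 0 < b) (k n : ℕ) :
    ∃ C : ℝ, ∀ x : V, ‖x‖ ^ k * ‖iteratedFDeriv ℝ n (fun v : V => exp (-b * ‖v‖ ^ 2)) x‖ ≤ C := by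
  obtain ⟨C, l, hC⟩ := exists_norm_iteratedFDeriv_exp_le
    ((Function.HasTemperateGrowth.const (-b)).mul (Function.hasTemperateGrowth_norm_sq (H := V))) n
  have hC₀ : 0 ≤ C := by simpa using (norm_nonneg _).trans (hC 0)
  refine ⟨C * exp ((k + l : ℕ) ^ 2 / (4 * b)), fun x => ?_⟩
  calc ‖x‖ ^ k * ‖iteratedFDeriv ℝ n (fun v : V => exp (-b * ‖v‖ ^ 2)) x‖
      ≤ (1 + ‖x‖) ^ k * (C * (1 + ‖x‖) ^ l * exp (-b * ‖x‖ ^ 2)) := by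
        gcongr
        · linarith
        · exact hC x
    _ = C * ((1 + ‖x‖) ^ (k + l) * exp (-b * ‖x‖ ^ 2)) := by ring
    _ ≤ C * exp ((k + l : ℕ) ^ 2 / (4 * b)) := by
        gcongr
        exact one_add_pow_mul_exp_neg_mul_sq_le hb _ (norm_nonneg x)

/-- The Gaussian `v ↦ exp (-b ‖v‖²)` as a Schwartz function. -/
def gaussianSchwartz (V : Type*) [NormedAddCommGroup V] [InnerProductSpace ℝ V] (hb : 0 < b) :
    𝓢(V, ℝ) where
  toFun v := exp (-b * ‖v‖ ^ 2)
  smooth' := (contDiff_const.mul (contDiff_norm_sq ℝ)).exp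
  decay' := exists_norm_pow_mul_iteratedFDeriv_gaussian_le hb

@[simp]
theorem gaussianSchwartz_apply (hb : 0 < b) (v : V) :
    gaussianSchwartz V hb v = exp (-b * ‖v‖ ^ 2) :=
  rfl

end GaussianSchwartz

section GaussianDensity

variable {E : Type*} [NormedAddCommGroup E] [InnerProductSpace ℝ E] [FiniteDimensional ℝ E]
  [MeasurableSpace E] [BorelSpace E]

theorem integral_cexp_neg_half_mul_sq_norm_add (t : E) :
    ∫ v : E, Complex.exp (-(1 / 2) * ‖v‖ ^ 2 + Complex.I * ⟪t, v⟫)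
      = ((2 * π) ^ ((Module.finrank ℝ E : ℝ) / 2) : ℝ) * Complex.exp (-‖t‖ ^ 2 / 2) := by
  rw [GaussianFourier.integral_cexp_neg_mul_sq_norm_add (by norm_num) Complex.I t,
    Complex.ofReal_cpow (by positivity)]
  push_cast
  rw [Complex.I_sq]
  congr 2 <;> ring

theorem withDensity_gaussian_eq_stdGaussian :
    (volume : Measure E).withDensity (fun v => ENNReal.ofReal
      ((2 * π) ^ (-(Module.finrank ℝ E : ℝ) / 2) * exp (-‖v‖ ^ 2 / 2))) = stdGaussian E := by
  set n : ℝ := (Module.finrank ℝ E : ℝ)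
  have hexp : Integrable fun v : E => exp (-‖v‖ ^ 2 / 2) := by
    refine (gaussianSchwartz E one_half_pos).integrable.congr (.of_forall fun v => ?_)
    simp [div_eq_inv_mul]
  have := isFiniteMeasure_withDensity_ofReal (hexp.const_mul ((2 * π) ^ (-n / 2))).2
  apply Measure.ext_of_charFun
  ext t
  rw [charFun_stdGaussian, charFun_apply,
    integral_withDensity_eq_integral_toReal_smul (by fun_prop) (by simp)]
  calc ∫ v : E, (ENNReal.ofReal ((2 * π) ^ (-n / 2) * exp (-‖v‖ ^ 2 / 2))).toReal •
          Complex.exp (⟪v, t⟫ * Complex.I)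
      = ∫ v : E, ((2 * π) ^ (-n / 2) : ℝ) *
          Complex.exp (-(1 / 2) * ‖v‖ ^ 2 + Complex.I * ⟪t, v⟫) := by
        congr with v
        rw [ENNReal.toReal_ofReal (by positivity), Complex.exp_add, Complex.real_smul,
          real_inner_comm]
        push_cast
        ring_nf
    _ = Complex.exp (-‖t‖ ^ 2 / 2) := by
        rw [integral_const_mul, integral_cexp_neg_half_mul_sq_norm_add, ← mul_assoc,
          ← Complex.ofReal_mul, ← rpow_add (by positivity)]
        simp [n, neg_div]

end GaussianDensity

section InnerL2

variable {α H : Type*} [MeasurableSpace α] {μ : Measure α} [NormedAddCommGroup H]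
  [InnerProductSpace ℝ H] {f g : α → H}

theorem integrable_inner_of_memLp_two (hf : MemLp f 2 μ) (hg : MemLp g 2 μ) :
    Integrable (fun x => ⟪f x, g x⟫) μ :=
  memLp_one_iff_integrable.1 ((innerSL ℝ).memLp_of_bilin 1 hf hg)

theorem integrable_smul_of_memLp_two {φ : α → ℝ} (hφ : MemLp φ 2 μ) (hf : MemLp f 2 μ) :
    Integrable (fun x => φ x • f x) μ :=
  memLp_one_iff_integrable.1 (hf.smul hφ)

theorem integral_norm_add_sq (hf : MemLp f 2 μ) (hg : MemLp g 2 μ) :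
    ∫ x, ‖f x + g x‖ ^ 2 ∂μ
      = ∫ x, ‖f x‖ ^ 2 ∂μ + 2 * ∫ x, ⟪f x, g x⟫ ∂μ + ∫ x, ‖g x‖ ^ 2 ∂μ := by
  have hf_sq : Integrable (fun x => ‖f x‖ ^ 2) μ := hf.norm.integrable_sq
  have hg_sq : Integrable (fun x => ‖g x‖ ^ 2) μ := hg.norm.integrable_sq
  have hinner := (integrable_inner_of_memLp_two hf hg).const_mul 2
  simp_rw [norm_add_sq_real]
  rw [integral_add (by exact hf_sq.add hinner) hg_sq, integral_add hf_sq hinner,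
    integral_const_mul]

end InnerL2

section TwistedGradient

variable {E : Type*} [NormedAddCommGroup E] [InnerProductSpace ℝ E] [CompleteSpace E]
  {f g : E → ℝ} {v : E}

theorem norm_gradient (g : E → ℝ) (v : E) : ‖∇ g v‖ = ‖fderiv ℝ g v‖ := by
  rw [← toDual_gradient, LinearIsometryEquiv.norm_map]

/-- The annihilation operator `A : g ↦ ∇g + (g / 2) v` of the harmonic oscillator, which factorizes
the Fokker–Planck operator as `L = -A*A`. -/
def twistedGradient (g : E → ℝ) (v : E) : E :=
  ∇ g v + (g v / 2) • v

theorem twistedGradient_sub (hf : DifferentiableAt ℝ f v) (hg : DifferentiableAt ℝ g v) :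
    twistedGradient (fun w => f w - g w) v = twistedGradient f v - twistedGradient g v := by
  have hgrad : ∇ (fun w => f w - g w) v = ∇ f v - ∇ g v := by
    simp only [gradient, fderiv_fun_sub hf hg, map_sub]
  simp only [twistedGradient, hgrad]
  module

theorem twistedGradient_mul (hf : DifferentiableAt ℝ f v) (hg : DifferentiableAt ℝ g v) :
    twistedGradient (fun w => f w * g w) v = g v • twistedGradient f v + f v • ∇ g v := by
  have hgrad : ∇ (fun w => f w * g w) v = f v • ∇ g v + g v • ∇ f v := by
    simp only [gradient, fderiv_fun_mul hf hg, map_add, map_smul]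
  simp only [twistedGradient, hgrad]
  module

theorem twistedGradient_const_mul_gaussian (c : ℝ) (v : E) :
    twistedGradient (fun w => c * exp (-(1 / 4) * ‖w‖ ^ 2)) v = 0 := by
  have hgrad : HasGradientAt (fun w : E => c * exp (-(1 / 4) * ‖w‖ ^ 2))
      (-(c * exp (-(1 / 4) * ‖v‖ ^ 2) / 2) • v) v := by
    rw [hasGradientAt_iff_hasFDerivAt]
    refine (((hasStrictFDerivAt_norm_sq v).hasFDerivAt.const_mul
      (-(1 / 4))).exp.const_mul c).congr_fderiv ?_
    ext w
    simp only [one_div, neg_mul, neg_smul, smul_neg, neg_apply, smul_apply, coe_innerSL_apply,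
      nsmul_eq_mul, Nat.cast_ofNat, smul_eq_mul, map_neg, map_smul, toDual_apply_apply, neg_inj]
    ring
  rw [twistedGradient, hgrad.gradient]
  module

end TwistedGradient

section InnerMulSchwartz

variable {E : Type*} [NormedAddCommGroup E] [InnerProductSpace ℝ E]

/-- Multiplication of a Schwartz function by the linear functional `v ↦ ⟪m, v⟫`. -/
def innerMulSchwartz (m : E) (g : 𝓢(E, ℝ)) : 𝓢(E, ℝ) :=
  SchwartzMap.smulLeftCLM ℝ (fun v => ⟪m, v⟫) g

@[simp]
theorem innerMulSchwartz_apply (m : E) (g : 𝓢(E, ℝ)) (v : E) :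
    innerMulSchwartz m g v = ⟪m, v⟫ * g v :=
  SchwartzMap.smulLeftCLM_apply_apply (Function.hasTemperateGrowth_inner_right m) g v

theorem fderiv_innerMulSchwartz_apply (m : E) (g : 𝓢(E, ℝ)) (v w : E) :
    fderiv ℝ (innerMulSchwartz m g) v w = ⟪m, w⟫ * g v + ⟪m, v⟫ * fderiv ℝ g v w := by
  have hderiv : HasFDerivAt (innerMulSchwartz m g) _ v :=
    (((innerSL ℝ m).hasFDerivAt (x := v)).mul (g.hasFDerivAt v)).congr_of_eventuallyEq
      (.of_forall fun u => innerMulSchwartz_apply m g u)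
  rw [hderiv.fderiv]
  simp only [coe_innerSL_apply, add_apply, smul_apply, smul_eq_mul]
  ring

end InnerMulSchwartz

section IntegrationByParts

variable {E : Type*} [NormedAddCommGroup E] [InnerProductSpace ℝ E] [FiniteDimensional ℝ E]
  [MeasurableSpace E] [BorelSpace E]

variable {p : ℝ≥0∞}

theorem memLp_fderiv_schwartz (g : 𝓢(E, ℝ)) : MemLp (fderiv ℝ g) p (volume : Measure E) :=
  (SchwartzMap.fderivCLM ℝ E ℝ g).memLp p volume

theorem memLp_gradient_schwartz (g : 𝓢(E, ℝ)) : MemLp (∇ g) p (volume : Measure E) :=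
  (toDual ℝ E).symm.lipschitz.comp_memLp (map_zero _) (memLp_fderiv_schwartz g)

theorem memLp_smul_id_schwartz (g : 𝓢(E, ℝ)) : MemLp (fun v => g v • v) p (volume : Measure E) :=
  (SchwartzMap.bilinLeftCLM (ContinuousLinearMap.lsmul ℝ ℝ)
    Function.HasTemperateGrowth.id' g).memLp p volume

theorem memLp_half_smul_id_schwartz (g : 𝓢(E, ℝ)) :
    MemLp (fun v => (g v / 2) • v) p (volume : Measure E) := by
  convert (memLp_smul_id_schwartz g).const_smul (1 / 2 : ℝ) using 1
  ext1 v
  simp [smul_smul, div_eq_inv_mul]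

theorem memLp_twistedGradient (g : 𝓢(E, ℝ)) : MemLp (twistedGradient g) p (volume : Measure E) :=
  (memLp_gradient_schwartz g).add (memLp_half_smul_id_schwartz g)

theorem integral_mul_fderiv_apply (f g : 𝓢(E, ℝ)) (m : E) :
    ∫ v, f v * fderiv ℝ g v m = -∫ v, fderiv ℝ f v m * g v :=
  SchwartzMap.integral_mul_lineDerivOp_right_eq_neg_left f g m

theorem integrable_mul_schwartz (f g : 𝓢(E, ℝ)) : Integrable fun v => f v * g v :=
  (f.memLp 2 volume).integrable_mul (g.memLp 2 volume)

theorem integrable_smul_gradient (f g : 𝓢(E, ℝ)) : Integrable fun v => f v • ∇ g v :=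
  integrable_smul_of_memLp_two (f.memLp 2 volume) (memLp_gradient_schwartz g)

theorem integral_smul_gradient (f g : 𝓢(E, ℝ)) : ∫ v, f v • ∇ g v = -∫ v, g v • ∇ f v := by
  refine ext_inner_left ℝ fun m => ?_
  rw [inner_neg_right, ← integral_inner (integrable_smul_gradient f g),
    ← integral_inner (integrable_smul_gradient g f)]
  simp_rw [inner_smul_right, inner_gradient_right]
  simpa [mul_comm] using integral_mul_fderiv_apply f g m

theorem integral_smul_twistedGradient_add (f g : 𝓢(E, ℝ)) :
    (∫ v, f v • twistedGradient g v) + ∫ v, g v • twistedGradient f v = ∫ v, (f v * g v) • v := by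
  have hint (f g : 𝓢(E, ℝ)) : Integrable fun v => f v • (g v / 2) • v :=
    integrable_smul_of_memLp_two (f.memLp 2 volume) (memLp_half_smul_id_schwartz g)
  have hsplit (v : E) : (f v * g v) • v = f v • (g v / 2) • v + g v • (f v / 2) • v := by module
  simp_rw [twistedGradient, smul_add, hsplit]
  rw [integral_add (integrable_smul_gradient f g) (hint f g),
    integral_add (integrable_smul_gradient g f) (hint g f), integral_add (hint f g) (hint g f),
    integral_smul_gradient]
  abel

theorem integrable_inner_mul_mul_fderiv_apply (g : 𝓢(E, ℝ)) (m : E) :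
    Integrable fun v => ⟪m, v⟫ * g v * fderiv ℝ g v m := by
  simpa [SchwartzMap.lineDerivOp_apply_eq_fderiv] using
    integrable_mul_schwartz (innerMulSchwartz m g) (∂_{m} g)

theorem integral_inner_mul_mul_fderiv_apply (g : 𝓢(E, ℝ)) (m : E) :
    ∫ v, ⟪m, v⟫ * g v * fderiv ℝ g v m = -(‖m‖ ^ 2 / 2) * ∫ v, g v ^ 2 := by
  have hparts := integral_mul_fderiv_apply (innerMulSchwartz m g) g m
  have hexpand (v : E) : fderiv ℝ (innerMulSchwartz m g) v m * g v
      = ‖m‖ ^ 2 * (g v * g v) + ⟪m, v⟫ * g v * fderiv ℝ g v m := by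
    rw [fderiv_innerMulSchwartz_apply, real_inner_self_eq_norm_sq]
    ring
  simp_rw [hexpand, innerMulSchwartz_apply] at hparts
  rw [integral_add ((integrable_mul_schwartz g g).const_mul _)
    (integrable_inner_mul_mul_fderiv_apply g m), integral_const_mul] at hparts
  simp_rw [sq (g _)]
  linarith

theorem integral_mul_fderiv_apply_self (g : 𝓢(E, ℝ)) :
    ∫ v, g v * fderiv ℝ g v v = -(Module.finrank ℝ E / 2) * ∫ v, g v ^ 2 := by
  set b := stdOrthonormalBasis ℝ E
  have hexpand (v : E) : g v * fderiv ℝ g v v = ∑ i, ⟪b i, v⟫ * g v * fderiv ℝ g v (b i) := by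
    conv_lhs => enter [2, 2]; rw [← b.sum_repr' v]
    simp only [map_sum, map_smul, smul_eq_mul, Finset.mul_sum]
    exact Finset.sum_congr rfl fun i _ => by ring
  simp_rw [hexpand]
  rw [integral_finsetSum _ fun i _ => integrable_inner_mul_mul_fderiv_apply g (b i)]
  simp_rw [integral_inner_mul_mul_fderiv_apply, b.norm_eq_one]
  simp only [Finset.sum_const, Finset.card_univ, Fintype.card_fin, nsmul_eq_mul]
  ring

theorem integral_laplacian_mul (g : 𝓢(E, ℝ)) :
    ∫ v, Δ g v * g v = -∫ v, ‖fderiv ℝ g v‖ ^ 2 := by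
  set b := stdOrthonormalBasis ℝ E
  have hparts (i) : ∫ v, g v * (∂_{b i} (∂_{b i} g)) v = -∫ v, fderiv ℝ g v (b i) ^ 2 := by
    simpa [sq, SchwartzMap.lineDerivOp_apply_eq_fderiv] using
      integral_mul_fderiv_apply g (∂_{b i} g) (b i)
  have hlaplacian (v : E) : Δ g v * g v = ∑ i, g v * (∂_{b i} (∂_{b i} g)) v := by
    rw [SchwartzMap.laplacian_eq_sum b, sum_apply, Finset.sum_mul]
    simp_rw [mul_comm]
  have hnorm (v : E) : ‖fderiv ℝ g v‖ ^ 2 = ∑ i, fderiv ℝ g v (b i) ^ 2 := by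
    simpa using b.norm_dual (fderiv ℝ g v)
  have hint (i) : Integrable fun v => fderiv ℝ g v (b i) ^ 2 :=
    ((∂_{b i} g).memLp 2 volume).integrable_sq
  simp_rw [hlaplacian, hnorm]
  rw [integral_finsetSum _ fun i _ => integrable_mul_schwartz g _,
    integral_finsetSum _ fun i _ => hint i, ← Finset.sum_neg_distrib]
  simp_rw [hparts]

theorem integral_norm_twistedGradient_sq (g : 𝓢(E, ℝ)) :
    ∫ v, ‖twistedGradient g v‖ ^ 2 = (∫ v, ‖fderiv ℝ g v‖ ^ 2)
      - Module.finrank ℝ E / 2 * (∫ v, g v ^ 2) + 1 / 4 * ∫ v, ‖v‖ ^ 2 * g v ^ 2 := by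
  have hcross (v : E) : ⟪∇ g v, (g v / 2) • v⟫ = 1 / 2 * (g v * fderiv ℝ g v v) := by
    rw [inner_smul_right, inner_gradient_left]
    ring
  have hpotential (v : E) : ‖(g v / 2) • v‖ ^ 2 = 1 / 4 * (‖v‖ ^ 2 * g v ^ 2) := by
    rw [norm_smul, mul_pow, norm_eq_abs, sq_abs]
    ring
  simp_rw [twistedGradient]
  rw [integral_norm_add_sq (memLp_gradient_schwartz g) (memLp_half_smul_id_schwartz g)]
  simp_rw [norm_gradient, hcross, hpotential, integral_const_mul, integral_mul_fderiv_apply_self]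
  ring

end IntegrationByParts

section Maxwellian

variable {d : ℕ}

theorem maxw_pos (v : Ed d) : 0 < maxw d v := by
  unfold maxw
  positivity

theorem sqrtM_pos (v : Ed d) : 0 < sqrtM d v :=
  sqrt_pos.2 (maxw_pos v)

theorem sqrtM_sq (v : Ed d) : sqrtM d v ^ 2 = maxw d v :=
  sq_sqrt (maxw_pos v).le

theorem sqrtM_eq (v : Ed d) :
    sqrtM d v = √((2 * π) ^ (-(d : ℝ) / 2)) * exp (-(1 / 4) * ‖v‖ ^ 2) := by
  rw [sqrtM, maxw, sqrt_mul (by positivity), ← exp_half]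
  ring_nf

/-- `√M` as a Schwartz function. -/
def sqrtMSchwartz (d : ℕ) : 𝓢(Ed d, ℝ) :=
  √((2 * π) ^ (-(d : ℝ) / 2)) • gaussianSchwartz (Ed d) (b := 1 / 4) (by norm_num)

@[simp]
theorem coe_sqrtMSchwartz (d : ℕ) : ⇑(sqrtMSchwartz d) = sqrtM d := by
  ext v
  rw [sqrtM_eq]
  rfl

theorem twistedGradient_sqrtM (v : Ed d) : twistedGradient (sqrtM d) v = 0 := by
  rw [funext sqrtM_eq, twistedGradient_const_mul_gaussian]

theorem memLp_sqrtM : MemLp (sqrtM d) 2 := by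
  simpa using (sqrtMSchwartz d).memLp 2 volume

theorem differentiable_sqrtM : Differentiable ℝ (sqrtM d) := by
  simpa using (sqrtMSchwartz d).differentiable

theorem withDensity_maxw :
    volume.withDensity (fun v => ENNReal.ofReal (maxw d v)) = stdGaussian (Ed d) := by
  simpa [maxw] using withDensity_gaussian_eq_stdGaussian (E := Ed d)

theorem continuous_maxw : Continuous (maxw d) := by
  unfold maxw
  fun_prop

theorem integral_stdGaussian_eq (k : Ed d → ℝ) :
    ∫ v, k v ∂stdGaussian (Ed d) = ∫ v, maxw d v * k v := by
  rw [← withDensity_maxw, integral_withDensity_eq_integral_toReal_smul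
    continuous_maxw.measurable.ennreal_ofReal (by simp)]
  simp [ENNReal.toReal_ofReal (maxw_pos _).le]

theorem integrable_stdGaussian_iff {k : Ed d → ℝ} :
    Integrable k (stdGaussian (Ed d)) ↔ Integrable fun v => maxw d v * k v := by
  rw [← withDensity_maxw, integrable_withDensity_iff_integrable_smul'
    continuous_maxw.measurable.ennreal_ofReal (by simp)]
  simp [ENNReal.toReal_ofReal (maxw_pos _).le]

theorem integral_maxw : ∫ v, maxw d v = 1 := by
  simpa using (integral_stdGaussian_eq (d := d) fun _ => 1).symm

theorem bFv_eq_integral_twistedGradient (f : 𝓢(Ed d, ℝ)) :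
    bFv d f = ∫ v, sqrtM d v • twistedGradient f v := by
  simpa [twistedGradient_sqrtM, bFv] using
    (integral_smul_twistedGradient_add (sqrtMSchwartz d) f).symm

theorem bFv_sqrtM : bFv d (sqrtM d) = 0 := by
  simpa [twistedGradient_sqrtM] using bFv_eq_integral_twistedGradient (sqrtMSchwartz d)

theorem integral_sq_le_of_integral_sqrtM_mul_eq_zero (g : 𝓢(Ed d, ℝ))
    (hg : ∫ v, sqrtM d v * g v = 0) :
    ∫ v, g v ^ 2 ≤ π ^ 2 / 8 * ∫ v, ‖twistedGradient g v‖ ^ 2 := by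
  set h : Ed d → ℝ := fun v => g v / sqrtM d v
  have hh : ContDiff ℝ 1 h := by
    have hsqrtM : ContDiff ℝ 1 (sqrtM d) := by simpa using (sqrtMSchwartz d).smooth 1
    exact (g.smooth 1).div hsqrtM fun v => (sqrtM_pos v).ne'
  have hfactor (v : Ed d) : sqrtM d v * h v = g v := mul_div_cancel₀ _ (sqrtM_pos v).ne'
  have hgrad (v : Ed d) : twistedGradient g v = sqrtM d v • ∇ h v := by
    rw [← funext hfactor, twistedGradient_mul (differentiable_sqrtM v)
      (hh.differentiable one_ne_zero v), twistedGradient_sqrtM, smul_zero, zero_add]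
  have hmean (v : Ed d) : maxw d v * h v = sqrtM d v * g v := by
    rw [← sqrtM_sq, sq, mul_assoc, hfactor]
  have hsq (v : Ed d) : maxw d v * h v ^ 2 = g v ^ 2 := by
    rw [← sqrtM_sq, ← mul_pow, hfactor]
  have henergy (v : Ed d) : maxw d v * ‖fderiv ℝ h v‖ ^ 2 = ‖twistedGradient g v‖ ^ 2 := by
    rw [hgrad, norm_smul, norm_gradient, mul_pow, norm_eq_abs, sq_abs, sqrtM_sq]
  have hmem : MemLp h 2 (stdGaussian (Ed d)) := by
    rw [memLp_two_iff_integrable_sq hh.continuous.aestronglyMeasurable, integrable_stdGaussian_iff]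
    simpa only [hsq] using (g.memLp 2 volume).integrable_sq
  have hfd : MemLp (fderiv ℝ h) 2 (stdGaussian (Ed d)) := by
    rw [memLp_two_iff_integrable_sq_norm
      (hh.continuous_fderiv one_ne_zero).aestronglyMeasurable, integrable_stdGaussian_iff]
    simpa only [henergy] using (memLp_twistedGradient g).norm.integrable_sq
  have hpoincare := variance_stdGaussian_le hh hmem hfd
  rw [variance_of_integral_eq_zero hh.continuous.aemeasurable] at hpoincare
  · simpa only [integral_stdGaussian_eq, hsq, henergy] using hpoincare
  · simpa only [integral_stdGaussian_eq, hmean] using hg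

end Maxwellian

section FokkerPlanck

variable {d : ℕ}

theorem lapv_eq_laplacian (g : 𝓢(Ed d, ℝ)) (v : Ed d) : lapv d g v = Δ g v := by
  rw [SchwartzMap.laplacian_eq_sum (EuclideanSpace.basisFun (Fin d) ℝ), sum_apply]
  simp_rw [EuclideanSpace.basisFun_apply]
  rfl

theorem integrable_norm_sq_mul_sq (g : 𝓢(Ed d, ℝ)) : Integrable fun v => ‖v‖ ^ 2 * g v ^ 2 := by
  simpa [norm_smul, mul_pow, mul_comm] using (memLp_smul_id_schwartz g).norm.integrable_sq

theorem neg_integral_fpL_mul (g : 𝓢(Ed d, ℝ)) :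
    -∫ v, fpL d g v * g v = ∫ v, ‖twistedGradient g v‖ ^ 2 := by
  have hexpand (v : Ed d) : fpL d g v * g v
      = Δ g v * g v + (d / 2 * g v ^ 2 - 1 / 4 * (‖v‖ ^ 2 * g v ^ 2)) := by
    rw [fpL, lapv_eq_laplacian]
    ring
  have hsq : Integrable fun v => d / 2 * g v ^ 2 := (g.memLp 2 volume).integrable_sq.const_mul _
  have hpotential := (integrable_norm_sq_mul_sq g).const_mul (1 / 4)
  simp_rw [hexpand]
  rw [integral_add (integrable_mul_schwartz (Δ g) g) (by exact hsq.sub hpotential),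
    integral_sub hsq hpotential, integral_const_mul, integral_const_mul, integral_laplacian_mul,
    integral_norm_twistedGradient_sq, finrank_euclideanSpace_fin]
  ring

theorem muNormSqV_eq (g : 𝓢(Ed d, ℝ)) :
    muNormSqV d g = (∫ v, ‖fderiv ℝ g v‖ ^ 2) + (∫ v, g v ^ 2) + ∫ v, ‖v‖ ^ 2 * g v ^ 2 := by
  have hfd : Integrable fun v => ‖fderiv ℝ g v‖ ^ 2 := (memLp_fderiv_schwartz g).norm.integrable_sq
  have hsq := (g.memLp 2 volume).integrable_sq
  simp_rw [muNormSqV, one_add_mul]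
  rw [integral_add hfd (by exact hsq.add (integrable_norm_sq_mul_sq g)),
    integral_add hsq (integrable_norm_sq_mul_sq g), add_assoc]

theorem muNormSqV_le (g : 𝓢(Ed d, ℝ)) (hg : ∫ v, sqrtM d v * g v = 0) :
    muNormSqV d g ≤ (4 + (2 * d + 1) * (π ^ 2 / 8)) * ∫ v, ‖twistedGradient g v‖ ^ 2 := by
  have hpoincare := integral_sq_le_of_integral_sqrtM_mul_eq_zero g hg
  have henergy := integral_norm_twistedGradient_sq g
  rw [finrank_euclideanSpace_fin] at henergy
  have hfd : 0 ≤ ∫ v, ‖fderiv ℝ g v‖ ^ 2 := by positivity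
  calc muNormSqV d g
      ≤ 4 * (∫ v, ‖twistedGradient g v‖ ^ 2) + (2 * d + 1) * ∫ v, g v ^ 2 := by
        rw [muNormSqV_eq]
        linarith
    _ ≤ 4 * (∫ v, ‖twistedGradient g v‖ ^ 2)
          + (2 * d + 1) * (π ^ 2 / 8 * ∫ v, ‖twistedGradient g v‖ ^ 2) := by gcongr
    _ = _ := by ring

/-- The microscopic part `{I - P} f` as a Schwartz function. -/
def microSchwartz (f : 𝓢(Ed d, ℝ)) : 𝓢(Ed d, ℝ) :=
  f - (aFv d f • sqrtMSchwartz d + innerMulSchwartz (bFv d f) (sqrtMSchwartz d))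

@[simp]
theorem coe_microSchwartz (f : 𝓢(Ed d, ℝ)) : ⇑(microSchwartz f) = IminusPv d f := by
  ext v
  simp only [microSchwartz, sub_apply, add_apply, smul_apply, coe_sqrtMSchwartz, smul_eq_mul,
    innerMulSchwartz_apply, IminusPv]
  ring

theorem integral_sqrtM_mul_inner_mul_sqrtM (m : Ed d) :
    ∫ v, sqrtM d v * (⟪m, v⟫ * sqrtM d v) = 0 := by
  have hint : Integrable fun v : Ed d => (sqrtM d v * sqrtM d v) • v := by
    simpa [smul_smul] using integrable_smul_of_memLp_two memLp_sqrtM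
      (memLp_smul_id_schwartz (sqrtMSchwartz d))
  calc ∫ v, sqrtM d v * (⟪m, v⟫ * sqrtM d v)
      = ∫ v, ⟪m, (sqrtM d v * sqrtM d v) • v⟫ := by
        congr with v
        rw [inner_smul_right]
        ring
    _ = ⟪m, bFv d (sqrtM d)⟫ := integral_inner hint m
    _ = 0 := by rw [bFv_sqrtM, inner_zero_right]

theorem integral_sqrtM_mul_IminusPv (f : 𝓢(Ed d, ℝ)) :
    ∫ v, sqrtM d v * IminusPv d f v = 0 := by
  have hexpand (v : Ed d) : sqrtM d v * IminusPv d f v = sqrtM d v * f v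
      - (aFv d f * maxw d v + sqrtM d v * (⟪bFv d f, v⟫ * sqrtM d v)) := by
    rw [IminusPv, ← sqrtM_sq]
    ring
  have hf : Integrable fun v => sqrtM d v * f v := by
    simpa using integrable_mul_schwartz (sqrtMSchwartz d) f
  have hmaxw : Integrable fun v => aFv d f * maxw d v := by
    simpa only [sqrtM_sq] using memLp_sqrtM.integrable_sq.const_mul (aFv d f)
  have hinner : Integrable fun v => sqrtM d v * (⟪bFv d f, v⟫ * sqrtM d v) := by
    simpa using integrable_mul_schwartz (sqrtMSchwartz d)
      (innerMulSchwartz (bFv d f) (sqrtMSchwartz d))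
  simp_rw [hexpand]
  rw [integral_sub hf (by exact hmaxw.add hinner), integral_add hmaxw hinner, integral_const_mul,
    integral_maxw, integral_sqrtM_mul_inner_mul_sqrtM, mul_one, add_zero, aFv, sub_self]

theorem twistedGradient_IminusPv (f : 𝓢(Ed d, ℝ)) (v : Ed d) :
    twistedGradient (IminusPv d f) v = twistedGradient f v - sqrtM d v • bFv d f := by
  have haffine : HasGradientAt (fun w => aFv d f + ⟪bFv d f, w⟫) (bFv d f) v :=
    ((innerSL ℝ (bFv d f)).hasFDerivAt (x := v)).const_add (aFv d f)
  have hprojection : twistedGradient (fun w => (aFv d f + ⟪bFv d f, w⟫) * sqrtM d w) v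
      = sqrtM d v • bFv d f := by
    simp_rw [mul_comm _ (sqrtM d _)]
    rw [twistedGradient_mul (differentiable_sqrtM v) haffine.differentiableAt,
      twistedGradient_sqrtM, haffine.gradient, smul_zero, zero_add]
  rw [← hprojection]
  exact twistedGradient_sub f.differentiableAt
    (haffine.differentiableAt.mul (differentiable_sqrtM v))

theorem integral_norm_twistedGradient_sq_eq_IminusPv_add (f : 𝓢(Ed d, ℝ)) :
    ∫ v, ‖twistedGradient f v‖ ^ 2
      = (∫ v, ‖twistedGradient (IminusPv d f) v‖ ^ 2) + ‖bFv d f‖ ^ 2 := by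
  set b := bFv d f
  have hb : MemLp (fun v => sqrtM d v • (-b)) 2 :=
    (ContinuousLinearMap.toSpanSingleton ℝ (-b)).comp_memLp' memLp_sqrtM
  have hint : Integrable fun v => sqrtM d v • twistedGradient f v :=
    integrable_smul_of_memLp_two memLp_sqrtM (memLp_twistedGradient f)
  have hcross : ∫ v, ⟪twistedGradient f v, sqrtM d v • (-b)⟫ = -‖b‖ ^ 2 := calc
    ∫ v, ⟪twistedGradient f v, sqrtM d v • (-b)⟫
      = ∫ v, ⟪-b, sqrtM d v • twistedGradient f v⟫ := by
        simp_rw [inner_smul_right, real_inner_comm]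
    _ = -‖b‖ ^ 2 := by
        rw [integral_inner hint, ← bFv_eq_integral_twistedGradient, inner_neg_left,
          real_inner_self_eq_norm_sq]
  have hnorm : ∫ v, ‖sqrtM d v • (-b)‖ ^ 2 = ‖b‖ ^ 2 := by
    simp_rw [norm_smul, mul_pow, norm_neg, norm_eq_abs, sq_abs, sqrtM_sq]
    rw [integral_mul_const, integral_maxw, one_mul]
  simp_rw [twistedGradient_IminusPv, sub_eq_add_neg, ← smul_neg]
  rw [integral_norm_add_sq (memLp_twistedGradient f) hb, hcross, hnorm]
  ring

end FokkerPlanck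

/-- Proposition 2.1 (ii), coercivity.

There exists `λ > 0` such that `-⟨L f, f⟩ ≥ λ |{I - P} f|²_μ + |b^f|²` for all suitable
(here: Schwartz) `f`, where `b^f = ⟨v√M, f⟩`. -/
theorem fokkerPlanck_coercivity (d : ℕ) (hd : 1 ≤ d) :
    ∃ lam > (0 : ℝ), ∀ f : SchwartzMap (Ed d) ℝ,
      - (∫ v : Ed d, fpL d (⇑f) v * f v)
        ≥ lam * muNormSqV d (IminusPv d (⇑f)) + ‖bFv d (⇑f)‖ ^ 2 := by
  refine ⟨(4 + (2 * d + 1) * (π ^ 2 / 8))⁻¹, by positivity, fun f => ?_⟩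
  have hmicro : ∫ v, sqrtM d v * microSchwartz f v = 0 := by
    simpa using integral_sqrtM_mul_IminusPv f
  have hnorm := muNormSqV_le (microSchwartz f) hmicro
  rw [coe_microSchwartz] at hnorm
  rw [neg_integral_fpL_mul, integral_norm_twistedGradient_sq_eq_IminusPv_add, ge_iff_le]
  gcongr
  rwa [inv_mul_le_iff₀ (by positivity)]
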